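/- Let Y be a real-valued random variable and Z a real-valued random variable whose law has a bounded Lebesgue density f_Z. Then for every x ∈ ℝ and every a > 0, ∫_{−a}^{a} | P(Y ≤ x + y) − P(Y ≤ x) | dy ≤ ‖f_Z‖_∞ · a² + 4a · d_K(Y,Z), where d_K(Y,Z) = sup_{t∈ℝ} |P(Y ≤ t) − P(Z ≤ t)| and ‖f_Z‖_∞ = sup f_Z. -/

import Mathlib

open MeasureTheory Filter Topology
open scoped ENNReal

/-- The Kolmogorov (uniform) distance between two laws on `ℝ`:
`d_K(μ,ν) = sup_t |μ(-∞,t] − ν(-∞,t]|`. -/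
noncomputable def kolDist (μ ν : Measure ℝ) : ℝ :=
  ⨆ t : ℝ, |(μ (Set.Iic t)).toReal - (ν (Set.Iic t)).toReal|

open scoped NNReal

/-! A bounded density makes `t ↦ P(Z ≤ t)` Lipschitz, and the distribution function of `Y` stays
within `d_K(Y, Z)` of it. Going from `x + y` to `x` through `Z` costs `‖f_Z‖_∞ |y|` plus one
Kolmogorov distance at each endpoint; integrating over `|y| ≤ a` and using `∫ |y| dy = a²` gives
the bound. -/

lemma bddAbove_range_abs_measureReal_Iic_sub (μ ν : Measure ℝ) [IsFiniteMeasure μ]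
    [IsFiniteMeasure ν] :
    BddAbove (Set.range fun t ↦ |μ.real (Set.Iic t) - ν.real (Set.Iic t)|) := by
  refine ⟨max (μ.real Set.univ) (ν.real Set.univ), ?_⟩
  rintro _ ⟨t, rfl⟩
  have hμ : μ.real (Set.Iic t) ≤ μ.real Set.univ := measureReal_mono (Set.subset_univ _)
  have hν : ν.real (Set.Iic t) ≤ ν.real Set.univ := measureReal_mono (Set.subset_univ _)
  exact abs_sub_le_of_nonneg_of_le measureReal_nonneg (le_max_of_le_left hμ)
    measureReal_nonneg (le_max_of_le_right hν)

lemma abs_measureReal_Iic_sub_le_kolDist (μ ν : Measure ℝ) [IsFiniteMeasure μ]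
    [IsFiniteMeasure ν] (t : ℝ) : |μ.real (Set.Iic t) - ν.real (Set.Iic t)| ≤ kolDist μ ν :=
  le_ciSup (bddAbove_range_abs_measureReal_Iic_sub μ ν) t

lemma withDensity_le_smul_of_ae_le {α : Type*} {_ : MeasurableSpace α} {μ : Measure α}
    {f : α → ℝ≥0∞} {c : ℝ≥0∞} (hf : ∀ᵐ x ∂μ, f x ≤ c) : μ.withDensity f ≤ c • μ :=
  (withDensity_mono hf).trans_eq (withDensity_const c)

lemma lipschitzWith_measureReal_Iic {ν : Measure ℝ} [IsFiniteMeasure ν] {K : ℝ≥0}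
    (hν : ν ≤ (K : ℝ≥0∞) • volume) : LipschitzWith K fun t ↦ ν.real (Set.Iic t) := by
  refine LipschitzWith.of_le_add_mul K fun s t ↦ ?_
  have hcover : Set.Iic s ⊆ Set.Iic t ∪ Set.uIoc t s :=
    Set.Iic_subset_Iic_union_Ioc.trans (Set.union_subset_union_right _ Set.Ioc_subset_uIoc)
  have huIoc : ν.real (Set.uIoc t s) ≤ K * dist s t := by
    refine ENNReal.toReal_le_of_le_ofReal (by positivity) ?_
    calc ν (Set.uIoc t s)
        ≤ K * volume (Set.uIoc t s) := hν _
      _ = ENNReal.ofReal (K * dist s t) := by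
        rw [Real.volume_uIoc, ENNReal.ofReal_mul K.coe_nonneg, ENNReal.ofReal_coe_nnreal,
          Real.dist_eq]
  calc ν.real (Set.Iic s)
      ≤ ν.real (Set.Iic t ∪ Set.uIoc t s) := measureReal_mono hcover
    _ ≤ ν.real (Set.Iic t) + ν.real (Set.uIoc t s) := measureReal_union_le _ _
    _ ≤ ν.real (Set.Iic t) + K * dist s t := by gcongr

lemma integral_symm_of_even {E : Type*} [NormedAddCommGroup E] [NormedSpace ℝ E] {f : ℝ → E}
    (hf : f.Even) {a : ℝ} (hfi : IntervalIntegrable f volume 0 a) :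
    ∫ y in (-a)..a, f y = (2 : ℝ) • ∫ y in 0..a, f y := by
  have hreflect : ∫ y in (-a)..0, f y = ∫ y in 0..a, f y := by
    simpa [hf _] using (intervalIntegral.integral_comp_neg f (a := 0) (b := a)).symm
  have hfi' : IntervalIntegrable f volume (-a) 0 := by
    simpa [hf _] using ((IntervalIntegrable.iff_comp_neg).1 hfi).symm
  rw [← intervalIntegral.integral_add_adjacent_intervals hfi' hfi, hreflect, two_smul]

lemma integral_abs_symm {a : ℝ} (ha : 0 ≤ a) : ∫ y in (-a)..a, |y| = a ^ 2 := by
  have habs : ∫ y in 0..a, |y| = ∫ y in 0..a, y :=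
    intervalIntegral.integral_congr fun y hy ↦
      abs_of_nonneg (Set.uIcc_of_le ha ▸ hy : y ∈ Set.Icc 0 a).1
  rw [integral_symm_of_even abs_neg (continuous_abs.intervalIntegrable _ _), habs, integral_id,
    smul_eq_mul]
  ring

lemma dist_le_mul_dist_add_of_lipschitzWith {α E : Type*} [PseudoMetricSpace α]
    [PseudoMetricSpace E] {F G : α → E} {K : ℝ≥0} {D : ℝ} (hG : LipschitzWith K G)
    (hFG : ∀ t, dist (F t) (G t) ≤ D) (s t : α) : dist (F s) (F t) ≤ K * dist s t + 2 * D :=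
  calc dist (F s) (F t)
      ≤ dist (F s) (G s) + dist (G s) (G t) + dist (G t) (F t) := dist_triangle4 _ _ _ _
    _ ≤ D + K * dist s t + D := by
        gcongr
        · exact hFG s
        · exact hG.dist_le_mul s t
        · exact dist_comm (F t) (G t) ▸ hFG t
    _ = K * dist s t + 2 * D := by ring

lemma integral_dist_add_left_le_of_lipschitzWith {E : Type*} [PseudoMetricSpace E] {F G : ℝ → E}
    {K : ℝ≥0} {D : ℝ} (hG : LipschitzWith K G) (hFG : ∀ t, dist (F t) (G t) ≤ D) (x : ℝ) {a : ℝ}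
    (ha : 0 ≤ a) : ∫ y in (-a)..a, dist (F (x + y)) (F x) ≤ K * a ^ 2 + 4 * a * D := by
  have hpoint (y : ℝ) : dist (F (x + y)) (F x) ≤ K * |y| + 2 * D := by
    simpa using dist_le_mul_dist_add_of_lipschitzWith hG hFG (x + y) x
  have hK : IntervalIntegrable (fun y : ℝ ↦ K * |y|) volume (-a) a :=
    Continuous.intervalIntegrable (by fun_prop) _ _
  calc ∫ y in (-a)..a, dist (F (x + y)) (F x)
      ≤ ‖∫ y in (-a)..a, dist (F (x + y)) (F x)‖ := Real.le_norm_self _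
    _ ≤ ∫ y in (-a)..a, (K * |y| + 2 * D) :=
        intervalIntegral.norm_integral_le_of_norm_le (neg_le_self ha)
          (.of_forall fun y _ ↦ (Real.norm_of_nonneg dist_nonneg).trans_le (hpoint y))
          (hK.add intervalIntegrable_const)
    _ = K * a ^ 2 + 4 * a * D := by
        rw [intervalIntegral.integral_add hK intervalIntegrable_const,
          intervalIntegral.integral_const_mul, integral_abs_symm ha,
          intervalIntegral.integral_const, smul_eq_mul]
        ring

theorem cdf_local_fluctuation_general {μ ν : Measure ℝ} [IsFiniteMeasure μ] [IsFiniteMeasure ν]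
    {K : ℝ≥0} (hν : LipschitzWith K fun t ↦ ν.real (Set.Iic t)) (x : ℝ) {a : ℝ} (ha : 0 ≤ a) :
    ∫ y in (-a)..a, |μ.real (Set.Iic (x + y)) - μ.real (Set.Iic x)| ≤
      K * a ^ 2 + 4 * a * kolDist μ ν :=
  integral_dist_add_left_le_of_lipschitzWith hν (abs_measureReal_Iic_sub_le_kolDist μ ν) x ha

/-- Intermediate smoothing step in the proof of Lemma 2.6: if `Z` has a bounded Lebesgue
density `f_Z`, then for every `x ∈ ℝ` and `a > 0`,
`∫_{−a}^{a} |P(Y ≤ x+y) − P(Y ≤ x)| dy ≤ ‖f_Z‖_∞ a² + 4a d_K(Y,Z)`. -/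
theorem cdf_local_fluctuation
    (μY μZ : Measure ℝ) [IsProbabilityMeasure μY]
    (fZ : ℝ → ℝ) (B : ℝ) (hfZmeas : Measurable fZ) (hfZ0 : ∀ x, 0 ≤ fZ x)
    (hfZB : ∀ x, fZ x ≤ B)
    (hμZ : μZ = MeasureTheory.volume.withDensity (fun x => ENNReal.ofReal (fZ x)))
    [IsProbabilityMeasure μZ]
    (x a : ℝ) (ha : 0 < a) :
    (∫ y in (-a)..a, |(μY (Set.Iic (x + y))).toReal - (μY (Set.Iic x)).toReal|) ≤
      B * a ^ 2 + 4 * a * kolDist μY μZ := by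
  lift B to ℝ≥0 using (hfZ0 0).trans (hfZB 0)
  have hdensity : μZ ≤ (B : ℝ≥0∞) • volume := hμZ ▸ withDensity_le_smul_of_ae_le
    (.of_forall fun t ↦ ENNReal.ofReal_le_coe.2 (hfZB t))
  exact cdf_local_fluctuation_general (lipschitzWith_measureReal_Iic hdensity) x ha.le
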